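/- Let K be a field, t ∈ K^×, κ ∈ Z^ℓ a multicharge, e ∈ {0,2,3,4,…}, and suppose (K,t) separates Std(P_n). If i ∈ I^n and 1 ≤ r < n satisfy i_r = i_{r+1}, then T_r f_i = f_i T_r in H_n(K,t,κ), where f_i is the residue idempotent. -/

import Mathlib

open scoped BigOperators
open scoped Classical

namespace Paper

/-! ## Quantum integers -/

/-- The quantum integer `[d]_x` in a field, for `d ∈ ℤ`. -/
noncomputable def qint {K : Type*} [Field K] (x : K) (d : ℤ) : K :=
  if 0 ≤ d then ∑ k ∈ Finset.range d.toNat, x ^ k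
  else -∑ k ∈ Finset.range (-d).toNat, x ^ (-((k : ℤ) + 1))

/-- The quantum integer `[d]_t` in a commutative ring, for an invertible `t` and `d ∈ ℤ`. -/
def qintU {O : Type*} [CommRing O] (t : Oˣ) (d : ℤ) : O :=
  if 0 ≤ d then ∑ k ∈ Finset.range d.toNat, (t : O) ^ k
  else -∑ k ∈ Finset.range (-d).toNat, ((t ^ (-((k : ℤ) + 1)) : Oˣ) : O)

/-! ## Nodes, multipartitions and standard tableaux -/

/-- A node `(l, r, c)`: component `l`, row `r`, column `c` (all `0`-based). -/
abbrev Node : Type := ℕ × ℕ × ℕ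

/-- `nodeBelow A B` holds when `B` is strictly below `A`, i.e. `A < B` lexicographically. -/
def nodeBelow (A B : Node) : Prop :=
  A.1 < B.1 ∨ (A.1 = B.1 ∧ (A.2.1 < B.2.1 ∨ (A.2.1 = B.2.1 ∧ A.2.2 < B.2.2)))

/-- An `ℓ`-multipartition of `n`. -/
structure Multipartition (ℓ n : ℕ) : Type where
  part : ℕ → ℕ → ℕ
  comp_bound : ∀ l, ℓ ≤ l → ∀ r, part l r = 0
  antitone : ∀ l, Antitone (part l)
  row_bound : ∀ l r, n ≤ r → part l r = 0
  size : (∑ l ∈ Finset.range ℓ, ∑ r ∈ Finset.range n, part l r) = n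

/-- The diagram of a multipartition. -/
def Multipartition.diagram {ℓ n : ℕ} (μ : Multipartition ℓ n) : Set Node :=
  {A | A.2.2 < μ.part A.1 A.2.1}

/-- A standard tableau: a bijection from the diagram of its shape onto `{1, …, n}`
that increases along rows and down columns of each component (it takes the value
`0` off the diagram, so that it is determined by its entries). -/
structure StdTableau (ℓ n : ℕ) : Type where
  shape : Multipartition ℓ n
  entry : Node → ℕ
  entry_zero : ∀ A, A ∉ shape.diagram → entry A = 0
  bijOn : Set.BijOn entry shape.diagram (Set.Icc 1 n)
  row_inc : ∀ l r c, (l, r, c + 1) ∈ shape.diagram → entry (l, r, c) < entry (l, r, c + 1)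
  col_inc : ∀ l r c, (l, r + 1, c) ∈ shape.diagram → entry (l, r, c) < entry (l, r + 1, c)

/-- The node of a standard tableau containing the entry `k`. -/
noncomputable def StdTableau.node {ℓ n : ℕ} (T : StdTableau ℓ n) (k : ℕ) : Node :=
  Function.invFunOn T.entry T.shape.diagram k

/-- The content `c_k(T) = κ_l + c - r` of the entry `k` in the tableau `T`
(`1 ≤ k ≤ n`). -/
noncomputable def content {ℓ n : ℕ} (κ : ℕ → ℤ) (T : StdTableau ℓ n) (k : ℕ) : ℤ :=
  κ (T.node k).1 + ((T.node k).2.2 : ℤ) - ((T.node k).2.1 : ℤ)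

/-- The residue sequence of a standard tableau, in `I^n` with `I = ℤ/eℤ`. -/
noncomputable def resSeq {ℓ n : ℕ} (e : ℕ) (κ : ℕ → ℤ) (T : StdTableau ℓ n) :
    Fin n → ZMod e :=
  fun k => ((content κ T (k.1 + 1) : ℤ) : ZMod e)

/-- The residue of a node. -/
def resNode (e : ℕ) (κ : ℕ → ℤ) (A : Node) : ZMod e :=
  ((κ A.1 + (A.2.2 : ℤ) - (A.2.1 : ℤ) : ℤ) : ZMod e)

/-- A set of nodes is the diagram of a multipartition (with at most `ℓ` components)
iff it is finite and downward closed in rows and columns. -/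
def IsDiagramSet (ℓ : ℕ) (S : Set Node) : Prop :=
  S.Finite ∧ (∀ A ∈ S, A.1 < ℓ) ∧
    (∀ l r c, (l, r, c + 1) ∈ S → (l, r, c) ∈ S) ∧
    (∀ l r c, (l, r + 1, c) ∈ S → (l, r, c) ∈ S)

/-- `A` is an addable node of the diagram `S`. -/
def Addable (ℓ : ℕ) (S : Set Node) (A : Node) : Prop :=
  A ∉ S ∧ IsDiagramSet ℓ (S ∪ {A})

/-- `A` is a removable node of the diagram `S`. -/
def Removable (ℓ : ℕ) (S : Set Node) (A : Node) : Prop :=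
  A ∈ S ∧ IsDiagramSet ℓ (S \ {A})

/-- `d_A(S)`: the number of addable nodes of `S` of the same residue as `A` strictly
below `A`, minus the number of removable ones. -/
noncomputable def dNode (ℓ e : ℕ) (κ : ℕ → ℤ) (S : Set Node) (A : Node) : ℤ :=
  (Set.ncard {B | Addable ℓ S B ∧ resNode e κ B = resNode e κ A ∧ nodeBelow A B} : ℤ) -
    (Set.ncard {B | Removable ℓ S B ∧ resNode e κ B = resNode e κ A ∧ nodeBelow A B} : ℤ)

/-- The Brundan–Kleshchev–Wang degree `deg_e(T)` of a standard tableau, written as the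
telescoping sum of the recursion `deg_e(T) = deg_e(T↓(n-1)) + d_A(Shape(T))`. -/
noncomputable def degE {ℓ n : ℕ} (e : ℕ) (κ : ℕ → ℤ) (T : StdTableau ℓ n) : ℤ :=
  ∑ m ∈ Finset.Icc 1 n,
    dNode ℓ e κ {A | A ∈ T.shape.diagram ∧ T.entry A ≤ m} (T.node m)

/-- The restriction of the diagram of `T` to entries `≤ m` (the diagram of `Shape(T↓m)`). -/
def restDiag {ℓ n : ℕ} (T : StdTableau ℓ n) (m : ℕ) : Set Node :=
  {A | A ∈ T.shape.diagram ∧ T.entry A ≤ m}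

/-- Dominance order on standard tableaux: `domTab S T` iff `S ⊵ T`. -/
def domTab {ℓ n : ℕ} (S T : StdTableau ℓ n) : Prop :=
  ∀ m l i : ℕ,
    Set.ncard {A | A ∈ restDiag T m ∧ (A.1 < l ∨ (A.1 = l ∧ A.2.1 ≤ i))} ≤
      Set.ncard {A | A ∈ restDiag S m ∧ (A.1 < l ∨ (A.1 = l ∧ A.2.1 ≤ i))}

/-- Interchange the entries `r` and `r + 1` in an entry function. -/
def swapEntry (f : Node → ℕ) (r : ℕ) : Node → ℕ :=
  fun A => if f A = r then r + 1 else if f A = r + 1 then r else f A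

/-- `ρ_r(T) = c_r(T) - c_{r+1}(T)`, the axial distance. -/
noncomputable def rhoTab {ℓ n : ℕ} (κ : ℕ → ℤ) (T : StdTableau ℓ n) (r : ℕ) : ℤ :=
  content κ T r - content κ T (r + 1)

/-- The entry function of the row-reading initial tableau `t^λ`. -/
noncomputable def tlamEntry {ℓ n : ℕ} (μ : Multipartition ℓ n) (A : Node) : ℕ :=
  if A ∈ μ.diagram then
    (∑ l ∈ Finset.range A.1, ∑ r ∈ Finset.range n, μ.part l r) +
      (∑ r ∈ Finset.range A.2.1, μ.part A.1 r) + A.2.2 + 1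
  else 0

/-- The finite set of possible contents of standard tableaux of size `n`. -/
noncomputable def contFinset (ℓ n : ℕ) (κ : ℕ → ℤ) : Finset ℤ :=
  ((Finset.range ℓ ×ˢ Finset.range n ×ˢ Finset.range n).image
      (fun x => κ x.1 + (x.2.2 : ℤ) - (x.2.1 : ℤ))).filter
    (fun c => ∃ T : StdTableau ℓ n, ∃ k, 1 ≤ k ∧ k ≤ n ∧ content κ T k = c)

/-- The standard tableau (if any) obtained from `T` by interchanging the entries
`r` and `r + 1`; i.e. `T·s_r` if it is standard, and `none` otherwise. -/
noncomputable def oSwapO {ℓ n : ℕ} (T : StdTableau ℓ n) (r : ℕ) :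
    Option (StdTableau ℓ n) :=
  if h : ∃ V : StdTableau ℓ n, V.entry = swapEntry T.entry r then some (Classical.choose h)
  else none

/-- `oSwap` extended to `Option`. -/
noncomputable def oSwap {ℓ n : ℕ} (X : Option (StdTableau ℓ n)) (r : ℕ) :
    Option (StdTableau ℓ n) :=
  X.bind fun T => oSwapO T r

/-- Evaluate a seminormal coefficient system on an optional tableau (by `0` if none). -/
noncomputable def aE {ℓ n : ℕ} {K : Type*} [Field K] (α : ℕ → StdTableau ℓ n → K) (r : ℕ)
    (X : Option (StdTableau ℓ n)) : K :=
  X.elim 0 (α r)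

/-! ## Separation and idempotent subrings -/

/-- `(K, t)` separates `Std(P_n)` (field version):
`[n]!_t ∏_{1 ≤ l < m ≤ ℓ} ∏_{-n < d < n} [κ_l - κ_m + d]_t ≠ 0`. -/
def SeparatesF {K : Type*} [Field K] (t : Kˣ) (n ℓ : ℕ) (κ : ℕ → ℤ) : Prop :=
  ((∏ d ∈ Finset.Icc 1 n, qint (t : K) (d : ℤ)) *
      ∏ l ∈ Finset.range ℓ, ∏ m ∈ Finset.Ioo l ℓ,
        ∏ d ∈ Finset.Ioo (-(n : ℤ)) (n : ℤ), qint (t : K) (κ l - κ m + d)) ≠ 0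

/-- `(O, t)` separates `Std(P_n)` (subring version): the separation element is a unit. -/
def SeparatesU {O : Type*} [CommRing O] (t : Oˣ) (n ℓ : ℕ) (κ : ℕ → ℤ) : Prop :=
  IsUnit ((∏ d ∈ Finset.Icc 1 n, qintU t (d : ℤ)) *
      ∏ l ∈ Finset.range ℓ, ∏ m ∈ Finset.Ioo l ℓ,
        ∏ d ∈ Finset.Ioo (-(n : ℤ)) (n : ℤ), qintU t (κ l - κ m + d))

/-- `(O, t)` is an `e`-idempotent subring of the field `K`. -/
def IsIdempotentSubring {K : Type*} [Field K] (O : Subring K) (t : Oˣ) (e n ℓ : ℕ)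
    (κ : ℕ → ℤ) : Prop :=
  SeparatesU t n ℓ κ ∧
    (∀ k : ℤ, ¬(e : ℤ) ∣ k → IsUnit (qintU t k)) ∧
    (∀ k : ℤ, (e : ℤ) ∣ k → qintU t k ∈ Ideal.jacobson (⊥ : Ideal O))

/-! ## The cyclotomic Hecke algebra, by generators and relations -/

/-- Generators `L_1, …, L_n`, `T_1, …, T_{n-1}` (here `0`-based). -/
inductive HeckeGen (n : ℕ) : Type
  | L : Fin n → HeckeGen n
  | T : Fin (n - 1) → HeckeGen n

/-- The position `r` of the pair `(r, r+1)` interchanged by the `r`-th transposition. -/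
def pL {n : ℕ} (r : Fin (n - 1)) : Fin n := ⟨r.1, by have := r.2; omega⟩

/-- The position `r + 1` of the pair interchanged by the `r`-th transposition. -/
def pR {n : ℕ} (r : Fin (n - 1)) : Fin n := ⟨r.1 + 1, by have := r.2; omega⟩

/-- The position `r + 2`, used in braid relations. -/
def pM {n : ℕ} (r : Fin (n - 1)) (hr : r.1 + 1 < n - 1) : Fin n := ⟨r.1 + 2, by omega⟩

/-- The free algebra generator `L_k`. -/
def hL (R : Type*) [CommRing R] {n : ℕ} (k : Fin n) : FreeAlgebra R (HeckeGen n) :=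
  FreeAlgebra.ι R (HeckeGen.L k)

/-- The free algebra generator `T_r`. -/
def hT (R : Type*) [CommRing R] {n : ℕ} (r : Fin (n - 1)) : FreeAlgebra R (HeckeGen n) :=
  FreeAlgebra.ι R (HeckeGen.T r)

/-- The defining relations of the integral cyclotomic Hecke algebra `H_n(R, t, κ)`. -/
inductive HeckeRel (R : Type*) [CommRing R] (t : Rˣ) (n ℓ : ℕ) (κ : ℕ → ℤ) :
    FreeAlgebra R (HeckeGen n) → FreeAlgebra R (HeckeGen n) → Prop
  | cyc (h : 0 < n) :
      HeckeRel R t n ℓ κ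
        (((List.range ℓ).map fun l =>
          hL R (⟨0, h⟩ : Fin n) - algebraMap R _ (qintU t (κ l))).prod) 0
  | quad (r : Fin (n - 1)) :
      HeckeRel R t n ℓ κ ((hT R r + 1) * (hT R r - algebraMap R _ (t : R))) 0
  | LL (k m : Fin n) : HeckeRel R t n ℓ κ (hL R k * hL R m) (hL R m * hL R k)
  | TTfar (r s : Fin (n - 1)) (h : r.1 + 1 < s.1 ∨ s.1 + 1 < r.1) :
      HeckeRel R t n ℓ κ (hT R r * hT R s) (hT R s * hT R r)
  | braid (r s : Fin (n - 1)) (h : s.1 = r.1 + 1) :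
      HeckeRel R t n ℓ κ (hT R r * hT R s * hT R r) (hT R s * hT R r * hT R s)
  | TL (r : Fin (n - 1)) (k : Fin n) (h : k.1 ≠ r.1 ∧ k.1 ≠ r.1 + 1) :
      HeckeRel R t n ℓ κ (hT R r * hL R k) (hL R k * hT R r)
  | LT (r : Fin (n - 1)) :
      HeckeRel R t n ℓ κ (hL R (pR r) * (hT R r - algebraMap R _ (t : R) + 1))
        (hT R r * hL R (pL r) + 1)

/-- The integral cyclotomic Hecke algebra of type `A`, `H_n(R, t, κ)`. -/
noncomputable abbrev CycHecke (R : Type*) [CommRing R] (t : Rˣ) (n ℓ : ℕ) (κ : ℕ → ℤ) :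
    Type _ :=
  RingQuot (HeckeRel R t n ℓ κ)

/-- The generator `L_k` of the cyclotomic Hecke algebra. -/
noncomputable def Lgen (R : Type*) [CommRing R] (t : Rˣ) (n ℓ : ℕ) (κ : ℕ → ℤ)
    (k : Fin n) : CycHecke R t n ℓ κ :=
  RingQuot.mkAlgHom R (HeckeRel R t n ℓ κ) (hL R k)

/-- The generator `T_r` of the cyclotomic Hecke algebra. -/
noncomputable def Tgen (R : Type*) [CommRing R] (t : Rˣ) (n ℓ : ℕ) (κ : ℕ → ℤ)
    (r : Fin (n - 1)) : CycHecke R t n ℓ κ :=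
  RingQuot.mkAlgHom R (HeckeRel R t n ℓ κ) (hT R r)

end Paper
/-! ## Quiver Hecke (KLR) algebras, by generators and relations -/

namespace Paper

/-- Generators `e(i)` (`i ∈ I^n`), `ψ_1, …, ψ_{n-1}`, `y_1, …, y_n` (here `0`-based). -/
inductive KLRGen (n e : ℕ) : Type
  | idem : (Fin n → ZMod e) → KLRGen n e
  | psi : Fin (n - 1) → KLRGen n e
  | y : Fin n → KLRGen n e

/-- The free algebra generator `e(i)`. -/
def kE (R : Type*) [CommRing R] {n e : ℕ} (i : Fin n → ZMod e) :
    FreeAlgebra R (KLRGen n e) :=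
  FreeAlgebra.ι R (KLRGen.idem i)

/-- The free algebra generator `ψ_r`. -/
def kPsi (R : Type*) [CommRing R] {n e : ℕ} (r : Fin (n - 1)) :
    FreeAlgebra R (KLRGen n e) :=
  FreeAlgebra.ι R (KLRGen.psi r)

/-- The free algebra generator `y_k`. -/
def kY (R : Type*) [CommRing R] {n e : ℕ} (k : Fin n) : FreeAlgebra R (KLRGen n e) :=
  FreeAlgebra.ι R (KLRGen.y k)

/-- `s_r · i`: interchange the entries of `i` at positions `r` and `r + 1`. -/
def swapSeq {n e : ℕ} (i : Fin n → ZMod e) (r : Fin (n - 1)) : Fin n → ZMod e :=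
  fun k => if k = pL r then i (pR r) else if k = pR r then i (pL r) else i k

/-- The defining relations of the cyclotomic quiver Hecke algebra `R_n^Λ(R)` where
`Λ = Σ_l Λ_{κ_l mod e}`. -/
inductive KLRRel (R : Type*) [CommRing R] (n e ℓ : ℕ) [NeZero e] (κ : ℕ → ℤ) :
    FreeAlgebra R (KLRGen n e) → FreeAlgebra R (KLRGen n e) → Prop
  | cyc (h : 0 < n) (i : Fin n → ZMod e) :
      KLRRel R n e ℓ κ
        ((kY R (⟨0, h⟩ : Fin n)) ^
            (((Finset.range ℓ).filter fun l => ((κ l : ZMod e) = i ⟨0, h⟩)).card) *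
          kE R i) 0
  | orth (i j : Fin n → ZMod e) (h : i ≠ j) : KLRRel R n e ℓ κ (kE R i * kE R j) 0
  | idem (i : Fin n → ZMod e) : KLRRel R n e ℓ κ (kE R i * kE R i) (kE R i)
  | complete : KLRRel R n e ℓ κ (∑ i : Fin n → ZMod e, kE R i) 1
  | yE (k : Fin n) (i : Fin n → ZMod e) :
      KLRRel R n e ℓ κ (kY R k * kE R i) (kE R i * kY R k)
  | psiE (r : Fin (n - 1)) (i : Fin n → ZMod e) :
      KLRRel R n e ℓ κ (kPsi R r * kE R i) (kE R (swapSeq i r) * kPsi R r)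
  | yy (k m : Fin n) : KLRRel R n e ℓ κ (kY R k * kY R m) (kY R m * kY R k)
  | psiyEq (r : Fin (n - 1)) (i : Fin n → ZMod e) (h : i (pL r) = i (pR r)) :
      KLRRel R n e ℓ κ (kPsi R r * kY R (pR r) * kE R i)
        ((kY R (pL r) * kPsi R r + 1) * kE R i)
  | psiyNe (r : Fin (n - 1)) (i : Fin n → ZMod e) (h : i (pL r) ≠ i (pR r)) :
      KLRRel R n e ℓ κ (kPsi R r * kY R (pR r) * kE R i)
        (kY R (pL r) * kPsi R r * kE R i)
  | ypsiEq (r : Fin (n - 1)) (i : Fin n → ZMod e) (h : i (pL r) = i (pR r)) :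
      KLRRel R n e ℓ κ (kY R (pR r) * kPsi R r * kE R i)
        ((kPsi R r * kY R (pL r) + 1) * kE R i)
  | ypsiNe (r : Fin (n - 1)) (i : Fin n → ZMod e) (h : i (pL r) ≠ i (pR r)) :
      KLRRel R n e ℓ κ (kY R (pR r) * kPsi R r * kE R i)
        (kPsi R r * kY R (pL r) * kE R i)
  | psiyFar (r : Fin (n - 1)) (k : Fin n) (h : k.1 ≠ r.1 ∧ k.1 ≠ r.1 + 1) :
      KLRRel R n e ℓ κ (kPsi R r * kY R k) (kY R k * kPsi R r)
  | psipsiFar (r s : Fin (n - 1)) (h : r.1 + 1 < s.1 ∨ s.1 + 1 < r.1) :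
      KLRRel R n e ℓ κ (kPsi R r * kPsi R s) (kPsi R s * kPsi R r)
  | quadEq (r : Fin (n - 1)) (i : Fin n → ZMod e) (h : i (pL r) = i (pR r)) :
      KLRRel R n e ℓ κ (kPsi R r ^ 2 * kE R i) 0
  | quadR (r : Fin (n - 1)) (i : Fin n → ZMod e)
      (h1 : i (pR r) = i (pL r) + 1) (h2 : i (pL r) ≠ i (pR r) + 1) :
      KLRRel R n e ℓ κ (kPsi R r ^ 2 * kE R i) ((kY R (pL r) - kY R (pR r)) * kE R i)
  | quadL (r : Fin (n - 1)) (i : Fin n → ZMod e)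
      (h1 : i (pL r) = i (pR r) + 1) (h2 : i (pR r) ≠ i (pL r) + 1) :
      KLRRel R n e ℓ κ (kPsi R r ^ 2 * kE R i) ((kY R (pR r) - kY R (pL r)) * kE R i)
  | quadBoth (r : Fin (n - 1)) (i : Fin n → ZMod e)
      (h1 : i (pR r) = i (pL r) + 1) (h2 : i (pL r) = i (pR r) + 1) :
      KLRRel R n e ℓ κ (kPsi R r ^ 2 * kE R i)
        ((kY R (pR r) - kY R (pL r)) * (kY R (pL r) - kY R (pR r)) * kE R i)
  | quadNone (r : Fin (n - 1)) (i : Fin n → ZMod e) (h1 : i (pL r) ≠ i (pR r))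
      (h2 : i (pR r) ≠ i (pL r) + 1) (h3 : i (pL r) ≠ i (pR r) + 1) :
      KLRRel R n e ℓ κ (kPsi R r ^ 2 * kE R i) (kE R i)
  | braidR (r : Fin (n - 1)) (hr : r.1 + 1 < n - 1) (i : Fin n → ZMod e)
      (h0 : i (pM r hr) = i (pL r)) (h1 : i (pR r) = i (pL r) + 1)
      (h2 : i (pL r) ≠ i (pR r) + 1) :
      KLRRel R n e ℓ κ (kPsi R r * kPsi R ⟨r.1 + 1, hr⟩ * kPsi R r * kE R i)
        ((kPsi R ⟨r.1 + 1, hr⟩ * kPsi R r * kPsi R ⟨r.1 + 1, hr⟩ - 1) * kE R i)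
  | braidL (r : Fin (n - 1)) (hr : r.1 + 1 < n - 1) (i : Fin n → ZMod e)
      (h0 : i (pM r hr) = i (pL r)) (h1 : i (pL r) = i (pR r) + 1)
      (h2 : i (pR r) ≠ i (pL r) + 1) :
      KLRRel R n e ℓ κ (kPsi R r * kPsi R ⟨r.1 + 1, hr⟩ * kPsi R r * kE R i)
        ((kPsi R ⟨r.1 + 1, hr⟩ * kPsi R r * kPsi R ⟨r.1 + 1, hr⟩ + 1) * kE R i)
  | braidBoth (r : Fin (n - 1)) (hr : r.1 + 1 < n - 1) (i : Fin n → ZMod e)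
      (h0 : i (pM r hr) = i (pL r)) (h1 : i (pR r) = i (pL r) + 1)
      (h2 : i (pL r) = i (pR r) + 1) :
      KLRRel R n e ℓ κ (kPsi R r * kPsi R ⟨r.1 + 1, hr⟩ * kPsi R r * kE R i)
        ((kPsi R ⟨r.1 + 1, hr⟩ * kPsi R r * kPsi R ⟨r.1 + 1, hr⟩ +
            kY R (pL r) - 2 * kY R (pR r) + kY R (pM r hr)) * kE R i)
  | braidNone (r : Fin (n - 1)) (hr : r.1 + 1 < n - 1) (i : Fin n → ZMod e)
      (h : ¬(i (pM r hr) = i (pL r) ∧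
        (i (pR r) = i (pL r) + 1 ∨ i (pL r) = i (pR r) + 1))) :
      KLRRel R n e ℓ κ (kPsi R r * kPsi R ⟨r.1 + 1, hr⟩ * kPsi R r * kE R i)
        (kPsi R ⟨r.1 + 1, hr⟩ * kPsi R r * kPsi R ⟨r.1 + 1, hr⟩ * kE R i)

/-- The cyclotomic quiver Hecke algebra `R_n^Λ(R)`, `Λ = Σ_l Λ_{κ_l mod e}`. -/
noncomputable abbrev KLR (R : Type*) [CommRing R] (n e ℓ : ℕ) [NeZero e] (κ : ℕ → ℤ) :
    Type _ :=
  RingQuot (KLRRel R n e ℓ κ)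

/-- The generator `e(i)` of the cyclotomic quiver Hecke algebra. -/
noncomputable def KeGen (R : Type*) [CommRing R] (n e ℓ : ℕ) [NeZero e] (κ : ℕ → ℤ)
    (i : Fin n → ZMod e) : KLR R n e ℓ κ :=
  RingQuot.mkAlgHom R (KLRRel R n e ℓ κ) (kE R i)

/-- The generator `ψ_r` of the cyclotomic quiver Hecke algebra. -/
noncomputable def KpsiGen (R : Type*) [CommRing R] (n e ℓ : ℕ) [NeZero e] (κ : ℕ → ℤ)
    (r : Fin (n - 1)) : KLR R n e ℓ κ :=
  RingQuot.mkAlgHom R (KLRRel R n e ℓ κ) (kPsi R r)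

/-- The generator `y_k` of the cyclotomic quiver Hecke algebra. -/
noncomputable def KyGen (R : Type*) [CommRing R] (n e ℓ : ℕ) [NeZero e] (κ : ℕ → ℤ)
    (k : Fin n) : KLR R n e ℓ κ :=
  RingQuot.mkAlgHom R (KLRRel R n e ℓ κ) (kY R k)

end Paper
/-! ## The deformed cyclotomic quiver Hecke algebra -/

namespace Paper

/-- `y_k^⟨d⟩ = t^d y_k + [d]_t` in the free algebra. -/
def ydot (R : Type*) [CommRing R] (t : Rˣ) {n e : ℕ} (d : ℤ) (k : Fin n) :
    FreeAlgebra R (KLRGen n e) :=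
  algebraMap R _ ((t ^ d : Rˣ) : R) * kY R k + algebraMap R _ (qintU t d)

/-- `ρ_r(i) = î_r - î_{r+1}` for `i ∈ I^n`. -/
def rhoI {n e : ℕ} (i : Fin n → ZMod e) (r : Fin (n - 1)) : ℤ :=
  ((i (pL r)).val : ℤ) - ((i (pR r)).val : ℤ)

/-- The defining relations of the deformed cyclotomic quiver Hecke algebra `R_n(O)`. -/
inductive DefKLRRel (R : Type*) [CommRing R] (t : Rˣ) (n e ℓ : ℕ) [NeZero e] (κ : ℕ → ℤ) :
    FreeAlgebra R (KLRGen n e) → FreeAlgebra R (KLRGen n e) → Prop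
  | cyc (h : 0 < n) (i : Fin n → ZMod e) :
      DefKLRRel R t n e ℓ κ
        ((((List.range ℓ).map fun l =>
            if ((κ l : ZMod e) = i ⟨0, h⟩) then
              kY R (⟨0, h⟩ : Fin n) -
                algebraMap R _ (qintU t (κ l - ((i ⟨0, h⟩).val : ℤ)))
            else 1).prod) * kE R i) 0
  | orth (i j : Fin n → ZMod e) (h : i ≠ j) : DefKLRRel R t n e ℓ κ (kE R i * kE R j) 0
  | idem (i : Fin n → ZMod e) : DefKLRRel R t n e ℓ κ (kE R i * kE R i) (kE R i)
  | complete : DefKLRRel R t n e ℓ κ (∑ i : Fin n → ZMod e, kE R i) 1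
  | yE (k : Fin n) (i : Fin n → ZMod e) :
      DefKLRRel R t n e ℓ κ (kY R k * kE R i) (kE R i * kY R k)
  | psiE (r : Fin (n - 1)) (i : Fin n → ZMod e) :
      DefKLRRel R t n e ℓ κ (kPsi R r * kE R i) (kE R (swapSeq i r) * kPsi R r)
  | yy (k m : Fin n) : DefKLRRel R t n e ℓ κ (kY R k * kY R m) (kY R m * kY R k)
  | psiyEq (r : Fin (n - 1)) (i : Fin n → ZMod e) (h : i (pL r) = i (pR r)) :
      DefKLRRel R t n e ℓ κ (kPsi R r * kY R (pR r) * kE R i)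
        ((kY R (pL r) * kPsi R r + 1) * kE R i)
  | psiyNe (r : Fin (n - 1)) (i : Fin n → ZMod e) (h : i (pL r) ≠ i (pR r)) :
      DefKLRRel R t n e ℓ κ (kPsi R r * kY R (pR r) * kE R i)
        (kY R (pL r) * kPsi R r * kE R i)
  | ypsiEq (r : Fin (n - 1)) (i : Fin n → ZMod e) (h : i (pL r) = i (pR r)) :
      DefKLRRel R t n e ℓ κ (kY R (pR r) * kPsi R r * kE R i)
        ((kPsi R r * kY R (pL r) + 1) * kE R i)
  | ypsiNe (r : Fin (n - 1)) (i : Fin n → ZMod e) (h : i (pL r) ≠ i (pR r)) :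
      DefKLRRel R t n e ℓ κ (kY R (pR r) * kPsi R r * kE R i)
        (kPsi R r * kY R (pL r) * kE R i)
  | psiyFar (r : Fin (n - 1)) (k : Fin n) (h : k.1 ≠ r.1 ∧ k.1 ≠ r.1 + 1) :
      DefKLRRel R t n e ℓ κ (kPsi R r * kY R k) (kY R k * kPsi R r)
  | psipsiFar (r s : Fin (n - 1)) (h : r.1 + 1 < s.1 ∨ s.1 + 1 < r.1) :
      DefKLRRel R t n e ℓ κ (kPsi R r * kPsi R s) (kPsi R s * kPsi R r)
  | quadEq (r : Fin (n - 1)) (i : Fin n → ZMod e) (h : i (pL r) = i (pR r)) :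
      DefKLRRel R t n e ℓ κ (kPsi R r ^ 2 * kE R i) 0
  | quadR (r : Fin (n - 1)) (i : Fin n → ZMod e)
      (h1 : i (pR r) = i (pL r) + 1) (h2 : i (pL r) ≠ i (pR r) + 1) :
      DefKLRRel R t n e ℓ κ (kPsi R r ^ 2 * kE R i)
        ((ydot R t (1 + rhoI i r) (pL r) - kY R (pR r)) * kE R i)
  | quadL (r : Fin (n - 1)) (i : Fin n → ZMod e)
      (h1 : i (pL r) = i (pR r) + 1) (h2 : i (pR r) ≠ i (pL r) + 1) :
      DefKLRRel R t n e ℓ κ (kPsi R r ^ 2 * kE R i)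
        ((ydot R t (1 - rhoI i r) (pR r) - kY R (pL r)) * kE R i)
  | quadBoth (r : Fin (n - 1)) (i : Fin n → ZMod e)
      (h1 : i (pR r) = i (pL r) + 1) (h2 : i (pL r) = i (pR r) + 1) :
      DefKLRRel R t n e ℓ κ (kPsi R r ^ 2 * kE R i)
        ((ydot R t (1 + rhoI i r) (pL r) - kY R (pR r)) *
          (ydot R t (1 - rhoI i r) (pR r) - kY R (pL r)) * kE R i)
  | quadNone (r : Fin (n - 1)) (i : Fin n → ZMod e) (h1 : i (pL r) ≠ i (pR r))
      (h2 : i (pR r) ≠ i (pL r) + 1) (h3 : i (pL r) ≠ i (pR r) + 1) :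
      DefKLRRel R t n e ℓ κ (kPsi R r ^ 2 * kE R i) (kE R i)
  | braidBoth (r : Fin (n - 1)) (hr : r.1 + 1 < n - 1) (i : Fin n → ZMod e)
      (h0 : i (pM r hr) = i (pL r)) (h1 : i (pR r) = i (pL r) + 1)
      (h2 : i (pL r) = i (pR r) + 1) :
      DefKLRRel R t n e ℓ κ
        ((kPsi R r * kPsi R ⟨r.1 + 1, hr⟩ * kPsi R r -
            kPsi R ⟨r.1 + 1, hr⟩ * kPsi R r * kPsi R ⟨r.1 + 1, hr⟩) * kE R i)
        ((ydot R t (1 + rhoI i r) (pL r) + ydot R t (1 + rhoI i r) (pM r hr) -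
            ydot R t (1 + rhoI i r) (pR r) - ydot R t (1 - rhoI i r) (pR r)) * kE R i)
  | braidR (r : Fin (n - 1)) (hr : r.1 + 1 < n - 1) (i : Fin n → ZMod e)
      (h0 : i (pM r hr) = i (pL r)) (h1 : i (pR r) = i (pL r) + 1)
      (h2 : i (pL r) ≠ i (pR r) + 1) :
      DefKLRRel R t n e ℓ κ
        ((kPsi R r * kPsi R ⟨r.1 + 1, hr⟩ * kPsi R r -
            kPsi R ⟨r.1 + 1, hr⟩ * kPsi R r * kPsi R ⟨r.1 + 1, hr⟩) * kE R i)
        (algebraMap R _ (-(((t ^ (1 + rhoI i r) : Rˣ) : R))) * kE R i)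
  | braidL (r : Fin (n - 1)) (hr : r.1 + 1 < n - 1) (i : Fin n → ZMod e)
      (h0 : i (pM r hr) = i (pL r)) (h1 : i (pL r) = i (pR r) + 1)
      (h2 : i (pR r) ≠ i (pL r) + 1) :
      DefKLRRel R t n e ℓ κ
        ((kPsi R r * kPsi R ⟨r.1 + 1, hr⟩ * kPsi R r -
            kPsi R ⟨r.1 + 1, hr⟩ * kPsi R r * kPsi R ⟨r.1 + 1, hr⟩) * kE R i)
        (kE R i)
  | braidNone (r : Fin (n - 1)) (hr : r.1 + 1 < n - 1) (i : Fin n → ZMod e)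
      (h : ¬(i (pM r hr) = i (pL r) ∧
        (i (pR r) = i (pL r) + 1 ∨ i (pL r) = i (pR r) + 1))) :
      DefKLRRel R t n e ℓ κ
        ((kPsi R r * kPsi R ⟨r.1 + 1, hr⟩ * kPsi R r -
            kPsi R ⟨r.1 + 1, hr⟩ * kPsi R r * kPsi R ⟨r.1 + 1, hr⟩) * kE R i) 0

/-- The deformed cyclotomic quiver Hecke algebra `R_n(R)`. -/
noncomputable abbrev DefKLR (R : Type*) [CommRing R] (t : Rˣ) (n e ℓ : ℕ) [NeZero e]
    (κ : ℕ → ℤ) : Type _ :=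
  RingQuot (DefKLRRel R t n e ℓ κ)

/-- The generator `f_i` of the deformed cyclotomic quiver Hecke algebra. -/
noncomputable def DfGen (R : Type*) [CommRing R] (t : Rˣ) (n e ℓ : ℕ) [NeZero e]
    (κ : ℕ → ℤ) (i : Fin n → ZMod e) : DefKLR R t n e ℓ κ :=
  RingQuot.mkAlgHom R (DefKLRRel R t n e ℓ κ) (kE R i)

/-- The generator `ψ_r` of the deformed cyclotomic quiver Hecke algebra. -/
noncomputable def DpsiGen (R : Type*) [CommRing R] (t : Rˣ) (n e ℓ : ℕ) [NeZero e]
    (κ : ℕ → ℤ) (r : Fin (n - 1)) : DefKLR R t n e ℓ κ :=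
  RingQuot.mkAlgHom R (DefKLRRel R t n e ℓ κ) (kPsi R r)

/-- The generator `y_k` of the deformed cyclotomic quiver Hecke algebra. -/
noncomputable def DyGen (R : Type*) [CommRing R] (t : Rˣ) (n e ℓ : ℕ) [NeZero e]
    (κ : ℕ → ℤ) (k : Fin n) : DefKLR R t n e ℓ κ :=
  RingQuot.mkAlgHom R (DefKLRRel R t n e ℓ κ) (kY R k)

/-! ## Seminormal idempotents -/

/-- The seminormal idempotent `F_T` of the semisimple cyclotomic Hecke algebra:
`F_T = ∏_{k=1}^n ∏_{c ∈ Cont(n), [c_k(T)] ≠ [c]} (L_k - [c]) / ([c_k(T)] - [c])`. -/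
noncomputable def Fidem (K : Type*) [Field K] (tK : Kˣ) (n ℓ : ℕ) (κ : ℕ → ℤ)
    (T : StdTableau ℓ n) : CycHecke K tK n ℓ κ :=
  ((List.finRange n).map (fun k =>
    (((contFinset ℓ n κ).sort (· ≤ ·)).map (fun c =>
      if qint (tK : K) (content κ T (k.1 + 1)) ≠ qint (tK : K) c then
        (Lgen K tK n ℓ κ k - algebraMap K _ (qint (tK : K) c)) *
          algebraMap K _ ((qint (tK : K) (content κ T (k.1 + 1)) - qint (tK : K) c)⁻¹)
      else 1)).prod)).prod

/-- The residue idempotent `f_i = Σ_{T ∈ Std(i)} F_T`. -/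
noncomputable def fres (K : Type*) [Field K] (tK : Kˣ) (n ℓ e : ℕ) (κ : ℕ → ℤ)
    (i : Fin n → ZMod e) : CycHecke K tK n ℓ κ :=
  ∑ᶠ T : {T : StdTableau ℓ n // resSeq e κ T = i}, Fidem K tK n ℓ κ T.1

/-- The simultaneous two-sided eigenspace `H_{S,T}` of the Jucys–Murphy elements. -/
noncomputable def eigSub (K : Type*) [Field K] (tK : Kˣ) (n ℓ : ℕ) (κ : ℕ → ℤ)
    (S T : StdTableau ℓ n) : Submodule K (CycHecke K tK n ℓ κ) where
  carrier := {h | ∀ k : Fin n,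
      Lgen K tK n ℓ κ k * h = qint (tK : K) (content κ S (k.1 + 1)) • h ∧
      h * Lgen K tK n ℓ κ k = qint (tK : K) (content κ T (k.1 + 1)) • h}
  add_mem' := by
    intro a b ha hb
    intro k
    obtain ⟨h1, h2⟩ := ha k
    obtain ⟨h3, h4⟩ := hb k
    exact ⟨by rw [mul_add, h1, h3, smul_add], by rw [add_mul, h2, h4, smul_add]⟩
  zero_mem' := by intro k; simp
  smul_mem' := by
    intro c a ha
    intro k
    obtain ⟨h1, h2⟩ := ha k
    constructor
    · rw [mul_smul_comm, h1, smul_comm]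
    · rw [smul_mul_assoc, h2, smul_comm]

end Paper

namespace Paper

/-! ### Swapping entries of standard tableaux -/

theorem swapEntry_swapEntry (f : Node → ℕ) (s : ℕ) : swapEntry (swapEntry f s) s = f := by
  funext A
  unfold swapEntry
  split_ifs <;> omega

theorem StdTableau.entry_pos {ℓ n : ℕ} (T : StdTableau ℓ n) {A : Node}
    (hA : A ∈ T.shape.diagram) : 1 ≤ T.entry A ∧ T.entry A ≤ n := T.bijOn.mapsTo hA

theorem StdTableau.mem_iff {ℓ n : ℕ} (T : StdTableau ℓ n) (A : Node) :
    A ∈ T.shape.diagram ↔ T.entry A ≠ 0 := by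
  constructor
  · intro h
    have := T.entry_pos h
    omega
  · intro h
    by_contra h'
    exact h (T.entry_zero A h')

theorem Multipartition.ext_diagram {ℓ n : ℕ} {μ ν : Multipartition ℓ n}
    (h : μ.diagram = ν.diagram) : μ = ν := by
  have hp : μ.part = ν.part := by
    funext l r
    have key : ∀ c, c < μ.part l r ↔ c < ν.part l r := fun c => by
      have : ((l, r, c) : Node) ∈ μ.diagram ↔ ((l, r, c) : Node) ∈ ν.diagram := by rw [h]
      exact this
    have h1 := key (μ.part l r)
    have h2 := key (ν.part l r)
    omega
  cases μ; cases ν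
  simp only at hp
  subst hp
  rfl

theorem StdTableau.ext_entry {ℓ n : ℕ} {S T : StdTableau ℓ n} (h : S.entry = T.entry) :
    S = T := by
  have hs : S.shape = T.shape := by
    apply Multipartition.ext_diagram
    ext A
    rw [S.mem_iff, T.mem_iff, h]
  cases S; cases T
  simp only at h hs
  subst h hs
  rfl

theorem StdTableau.node_entry {ℓ n : ℕ} (T : StdTableau ℓ n) {A : Node}
    (hA : A ∈ T.shape.diagram) : T.node (T.entry A) = A :=
  T.bijOn.injOn.leftInvOn_invFunOn hA

theorem part_le {ℓ n : ℕ} (μ : Multipartition ℓ n) (l r : ℕ) : μ.part l r ≤ n := by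
  by_cases hl : ℓ ≤ l
  · rw [μ.comp_bound l hl]; omega
  by_cases hr : n ≤ r
  · rw [μ.row_bound l r hr]; omega
  calc μ.part l r ≤ ∑ r ∈ Finset.range n, μ.part l r :=
        Finset.single_le_sum (f := fun r => μ.part l r) (fun _ _ => Nat.zero_le _)
          (Finset.mem_range.2 (by omega))
    _ ≤ ∑ l ∈ Finset.range ℓ, ∑ r ∈ Finset.range n, μ.part l r :=
        Finset.single_le_sum (f := fun l => ∑ r ∈ Finset.range n, μ.part l r)
          (fun _ _ => Nat.zero_le _) (Finset.mem_range.2 (by omega))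
    _ = n := μ.size

theorem StdTableau.mem_bounds {ℓ n : ℕ} (T : StdTableau ℓ n) {A : Node}
    (hA : A ∈ T.shape.diagram) : A.1 < ℓ ∧ A.2.1 < n ∧ A.2.2 < n := by
  have hA' : A.2.2 < T.shape.part A.1 A.2.1 := hA
  refine ⟨?_, ?_, lt_of_lt_of_le hA' (part_le _ _ _)⟩
  · by_contra h
    rw [T.shape.comp_bound _ (by omega)] at hA'
    omega
  · by_contra h
    rw [T.shape.row_bound _ _ (by omega)] at hA'
    omega

theorem StdTableau.finite (ℓ n : ℕ) : Finite (StdTableau ℓ n) := by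
  let F : StdTableau ℓ n → (Fin ℓ × Fin n × Fin n → Fin (n + 1)) := fun T x =>
    ⟨T.entry (x.1.1, x.2.1.1, x.2.2.1), by
      by_cases h : ((x.1.1, x.2.1.1, x.2.2.1) : Node) ∈ T.shape.diagram
      · have := T.entry_pos h
        omega
      · rw [T.entry_zero _ h]; omega⟩
  apply Finite.of_injective F
  intro S T hST
  apply StdTableau.ext_entry
  funext A
  by_cases hb : A.1 < ℓ ∧ A.2.1 < n ∧ A.2.2 < n
  · have := congrFun hST (⟨A.1, hb.1⟩, ⟨A.2.1, hb.2.1⟩, ⟨A.2.2, hb.2.2⟩)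
    exact congrArg Fin.val this
  · rw [S.entry_zero A (fun h => hb (S.mem_bounds h)),
      T.entry_zero A (fun h => hb (T.mem_bounds h))]

theorem exists_swap {ℓ n : ℕ} (κ : ℕ → ℤ) (T : StdTableau ℓ n) (s : ℕ) (hs : 1 ≤ s)
    (hsn : s + 1 ≤ n) (h1 : content κ T (s + 1) ≠ content κ T s + 1)
    (h2 : content κ T (s + 1) ≠ content κ T s - 1) :
    ∃ V : StdTableau ℓ n, V.shape = T.shape ∧ V.entry = swapEntry T.entry s := by
  refine ⟨⟨T.shape, swapEntry T.entry s, ?_, ⟨?_, ?_, ?_⟩, ?_, ?_⟩, rfl, rfl⟩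
  · intro A hA
    have := T.entry_zero A hA
    unfold swapEntry
    split_ifs <;> omega
  · intro A hA
    have := T.entry_pos hA
    unfold swapEntry
    simp only [Set.mem_Icc]
    split_ifs <;> omega
  · intro A hA B hB hAB
    apply T.bijOn.injOn hA hB
    unfold swapEntry at hAB
    split_ifs at hAB <;> omega
  · intro k hk
    simp only [Set.mem_Icc] at hk
    obtain ⟨A, hA, hAk⟩ := T.bijOn.surjOn
      (show (if k = s then s + 1 else if k = s + 1 then s else k) ∈ Set.Icc 1 n by
        simp only [Set.mem_Icc]; split_ifs <;> omega)
    refine ⟨A, hA, ?_⟩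
    unfold swapEntry
    rw [hAk]
    split_ifs <;> omega
  · intro l r c hB
    have hA : ((l, r, c) : Node) ∈ T.shape.diagram := by
      have hB' : c + 1 < T.shape.part l r := hB
      exact (show c < T.shape.part l r by omega)
    have hlt := T.row_inc l r c hB
    by_cases hc : T.entry (l, r, c) = s ∧ T.entry (l, r, c + 1) = s + 1
    · exfalso
      apply h1
      have nA := T.node_entry hA
      have nB := T.node_entry hB
      rw [hc.1] at nA
      rw [hc.2] at nB
      simp only [content, nA, nB]
      push_cast
      ring
    · unfold swapEntry
      split_ifs <;> omega
  · intro l r c hB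
    have hA : ((l, r, c) : Node) ∈ T.shape.diagram := by
      have hB' : c < T.shape.part l (r + 1) := hB
      have := T.shape.antitone l (Nat.le_succ r)
      exact (show c < T.shape.part l r from lt_of_lt_of_le hB' this)
    have hlt := T.col_inc l r c hB
    by_cases hc : T.entry (l, r, c) = s ∧ T.entry (l, r + 1, c) = s + 1
    · exfalso
      apply h2
      have nA := T.node_entry hA
      have nB := T.node_entry hB
      rw [hc.1] at nA
      rw [hc.2] at nB
      simp only [content, nA, nB]
      push_cast
      ring
    · unfold swapEntry
      split_ifs <;> omega

theorem content_swap {ℓ n : ℕ} (κ : ℕ → ℤ) (T V : StdTableau ℓ n) (r : Fin (n - 1))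
    (hshape : V.shape = T.shape) (hV : V.entry = swapEntry T.entry (r.1 + 1)) (k : Fin n) :
    content κ V ((Equiv.swap (pL r) (pR r) k).1 + 1) = content κ T (k.1 + 1) := by
  obtain ⟨A, hA, hAk⟩ := T.bijOn.surjOn
    (show k.1 + 1 ∈ Set.Icc 1 n by simp only [Set.mem_Icc]; omega)
  have nT := T.node_entry hA
  have nV := V.node_entry (hshape ▸ hA : A ∈ V.shape.diagram)
  rw [hAk] at nT
  have : V.entry A = (Equiv.swap (pL r) (pR r) k).1 + 1 := by
    rw [hV]
    unfold swapEntry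
    rw [hAk, Equiv.swap_apply_def]
    simp only [Fin.ext_iff, pL, pR]
    split_ifs <;> simp <;> omega
  rw [this] at nV
  simp only [content, nT, nV]

/-! ### The polynomials evaluating to seminormal idempotents -/

/-- One row factor of the polynomial lifting `F_T`. -/
noncomputable def facPoly (K : Type*) [Field K] (tK : Kˣ) (n ℓ : ℕ) (κ : ℕ → ℤ)
    (k : Fin n) (d : ℤ) : MvPolynomial (Fin n) K :=
  (((contFinset ℓ n κ).sort (· ≤ ·)).map (fun c =>
      if qint (tK : K) d ≠ qint (tK : K) c then
        (MvPolynomial.X k - algebraMap K _ (qint (tK : K) c)) *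
          algebraMap K _ ((qint (tK : K) d - qint (tK : K) c)⁻¹)
      else 1)).prod

/-- The polynomial lifting `F_T`. -/
noncomputable def Fpoly (K : Type*) [Field K] (tK : Kˣ) (n ℓ : ℕ) (κ : ℕ → ℤ)
    (T : StdTableau ℓ n) : MvPolynomial (Fin n) K :=
  ∏ k : Fin n, facPoly K tK n ℓ κ k (content κ T (k.1 + 1))

theorem rename_facPoly (K : Type*) [Field K] (tK : Kˣ) (n ℓ : ℕ) (κ : ℕ → ℤ)
    (s : Fin n → Fin n) (k : Fin n) (d : ℤ) :
    MvPolynomial.rename s (facPoly K tK n ℓ κ k d) = facPoly K tK n ℓ κ (s k) d := by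
  unfold facPoly
  rw [map_list_prod, List.map_map]
  congr 2
  funext c
  simp only [Function.comp]
  split_ifs
  · simp only [map_mul, map_sub, MvPolynomial.rename_X, AlgHom.commutes]
  · simp only [map_one]

theorem map_Fpoly (K : Type*) [Field K] (tK : Kˣ) (n ℓ : ℕ) (κ : ℕ → ℤ)
    (φ : MvPolynomial (Fin n) K →ₐ[K] CycHecke K tK n ℓ κ)
    (hφ : ∀ k, φ (MvPolynomial.X k) = Lgen K tK n ℓ κ k) (T : StdTableau ℓ n) :
    φ (Fpoly K tK n ℓ κ T) = Fidem K tK n ℓ κ T := by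
  unfold Fpoly Fidem
  rw [Fin.prod_univ_def, map_list_prod, List.map_map]
  congr 2
  funext k
  simp only [Function.comp, facPoly]
  rw [map_list_prod, List.map_map]
  congr 2
  funext c
  simp only [Function.comp]
  split_ifs
  · simp only [map_mul, map_sub, hφ, AlgHom.commutes]
  · simp only [map_one]

theorem rename_Fpoly (K : Type*) [Field K] (tK : Kˣ) (n ℓ : ℕ) (κ : ℕ → ℤ)
    (T V : StdTableau ℓ n) (s : Equiv.Perm (Fin n))
    (h : ∀ k, content κ V ((s k).1 + 1) = content κ T (k.1 + 1)) :
    MvPolynomial.rename s (Fpoly K tK n ℓ κ T) = Fpoly K tK n ℓ κ V := by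
  unfold Fpoly
  rw [map_prod, ← Equiv.prod_comp s (fun k => facPoly K tK n ℓ κ k (content κ V (k.1 + 1)))]
  refine Finset.prod_congr rfl fun k _ => ?_
  rw [rename_facPoly, h]

/-! ### Relations in the Hecke algebra -/

section Rel
variable (R : Type*) [CommRing R] (t : Rˣ) (n ℓ : ℕ) (κ : ℕ → ℤ)

theorem L_comm (k m : Fin n) : Lgen R t n ℓ κ k * Lgen R t n ℓ κ m =
    Lgen R t n ℓ κ m * Lgen R t n ℓ κ k := by
  have := RingQuot.mkAlgHom_rel R (HeckeRel.LL (R := R) (t := t) (ℓ := ℓ) (κ := κ) k m)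
  simp only [map_mul] at this
  exact this

theorem T_L (r : Fin (n - 1)) (k : Fin n) (h : k.1 ≠ r.1 ∧ k.1 ≠ r.1 + 1) :
    Tgen R t n ℓ κ r * Lgen R t n ℓ κ k = Lgen R t n ℓ κ k * Tgen R t n ℓ κ r := by
  have := RingQuot.mkAlgHom_rel R (HeckeRel.TL (R := R) (t := t) (ℓ := ℓ) (κ := κ) r k h)
  simp only [map_mul] at this
  exact this

theorem T_quad (r : Fin (n - 1)) :
    (Tgen R t n ℓ κ r + 1) * (Tgen R t n ℓ κ r - algebraMap R _ (t : R)) = 0 := by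
  have := RingQuot.mkAlgHom_rel R (HeckeRel.quad (R := R) (t := t) (ℓ := ℓ) (κ := κ) r)
  simp only [map_mul, map_add, map_sub, map_one, map_zero, AlgHom.commutes] at this
  exact this

theorem L_T (r : Fin (n - 1)) :
    Lgen R t n ℓ κ (pR r) * (Tgen R t n ℓ κ r - algebraMap R _ (t : R) + 1) =
      Tgen R t n ℓ κ r * Lgen R t n ℓ κ (pL r) + 1 := by
  have := RingQuot.mkAlgHom_rel R (HeckeRel.LT (R := R) (t := t) (ℓ := ℓ) (κ := κ) r)
  simp only [map_mul, map_add, map_sub, map_one, map_zero, AlgHom.commutes] at this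
  exact this

end Rel

theorem abstract_TL {R A : Type*} [CommRing R] [Ring A] [Algebra R A] (t : Rˣ) (T L M : A)
    (hq : (T + 1) * (T - algebraMap R A (t : R)) = 0)
    (hL : M * (T - algebraMap R A (t : R) + 1) = T * L + 1) :
    T * M = L * T + ((algebraMap R A (t : R) - 1) * M + 1) := by
  set τ := algebraMap R A (t : R) with hτ
  set τ' := algebraMap R A ((t⁻¹ : Rˣ) : R) with hτ'
  have hinv : τ' * τ = 1 := by
    rw [hτ, hτ', ← map_mul, Units.inv_mul, map_one]
  have cT : τ * T = T * τ := Algebra.commutes _ _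
  have cM : τ * M = M * τ := Algebra.commutes _ _
  have cL : τ * L = L * τ := Algebra.commutes _ _
  have e1 : (T - τ + 1) * T = τ := by
    have : (T - τ + 1) * T = τ + (T + 1) * (T - τ) := by
      simp only [sub_mul, add_mul, mul_sub, one_mul]
      rw [cT]; abel
    rw [this, hq, add_zero]
  have e2 : τ * M = T * L * T + T := by
    calc τ * M = M * ((T - τ + 1) * T) := by rw [e1, cM]
      _ = (M * (T - τ + 1)) * T := by rw [mul_assoc]
      _ = T * L * T + T := by rw [hL, add_mul, one_mul]
  have e3 : T * T = τ * T - T + τ := by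
    have : T * T = (T + 1) * (T - τ) + (τ * T - T + τ) := by
      simp only [add_mul, mul_sub, one_mul]
      rw [cT]; abel
    rw [this, hq, zero_add]
  have e4 : τ * (T * M) = τ * (L * T + ((τ - 1) * M + 1)) := by
    have step : τ * (T * M) = T * T * (L * T + 1) := by
      rw [← mul_assoc, cT, mul_assoc, e2]
      simp only [mul_add, mul_one, mul_assoc]
    have e2' : T * (L * T) = τ * M - T := by rw [e2, mul_assoc]; abel
    rw [step, e3]
    simp only [add_mul, sub_mul, mul_add, mul_sub, mul_one, one_mul, mul_assoc, e2']
    abel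
  calc T * M = τ' * (τ * (T * M)) := by rw [← mul_assoc, hinv, one_mul]
    _ = _ := by rw [e4, ← mul_assoc, hinv, one_mul]

/-! ### Evaluation of polynomials at the Jucys–Murphy elements -/

theorem exists_eval (R : Type*) [CommRing R] (t : Rˣ) (n ℓ : ℕ) (κ : ℕ → ℤ) :
    ∃ φ : MvPolynomial (Fin n) R →ₐ[R] CycHecke R t n ℓ κ,
      ∀ k, φ (MvPolynomial.X k) = Lgen R t n ℓ κ k := by
  let S := Algebra.adjoin R (Set.range (Lgen R t n ℓ κ))
  letI : CommRing S := Algebra.adjoinCommRingOfComm R (by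
    rintro _ ⟨k, rfl⟩ _ ⟨m, rfl⟩
    exact L_comm R t n ℓ κ k m)
  let g : Fin n → S := fun k => ⟨Lgen R t n ℓ κ k, Algebra.subset_adjoin ⟨k, rfl⟩⟩
  refine ⟨S.val.comp (MvPolynomial.aeval g), fun k => ?_⟩
  simp [g]

theorem demazure {K : Type*} [Field K] (t : Kˣ) (n ℓ : ℕ) (κ : ℕ → ℤ)
    (φ : MvPolynomial (Fin n) K →ₐ[K] CycHecke K t n ℓ κ)
    (hφ : ∀ k, φ (MvPolynomial.X k) = Lgen K t n ℓ κ k) (r : Fin (n - 1))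
    (P : MvPolynomial (Fin n) K) :
    ∃ Q : MvPolynomial (Fin n) K,
      Tgen K t n ℓ κ r * φ P =
        φ (MvPolynomial.rename (Equiv.swap (pL r) (pR r)) P) * Tgen K t n ℓ κ r + φ Q ∧
      (MvPolynomial.X (pR r) - MvPolynomial.X (pL r)) * Q =
        (P - MvPolynomial.rename (Equiv.swap (pL r) (pR r)) P) *
          ((algebraMap K _ (t : K) - 1) * MvPolynomial.X (pR r) + 1) := by
  have hTM := abstract_TL t (Tgen K t n ℓ κ r) _ _ (T_quad K t n ℓ κ r) (L_T K t n ℓ κ r)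
  have hTL := L_T K t n ℓ κ r
  have mulc : ∀ P P' : MvPolynomial (Fin n) K, (∃ Q : MvPolynomial (Fin n) K,
      Tgen K t n ℓ κ r * φ P =
        φ (MvPolynomial.rename (Equiv.swap (pL r) (pR r)) P) * Tgen K t n ℓ κ r + φ Q ∧
      (MvPolynomial.X (pR r) - MvPolynomial.X (pL r)) * Q =
        (P - MvPolynomial.rename (Equiv.swap (pL r) (pR r)) P) *
          ((algebraMap K _ (t : K) - 1) * MvPolynomial.X (pR r) + 1)) →
      (∃ Q : MvPolynomial (Fin n) K,
      Tgen K t n ℓ κ r * φ P' =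
        φ (MvPolynomial.rename (Equiv.swap (pL r) (pR r)) P') * Tgen K t n ℓ κ r + φ Q ∧
      (MvPolynomial.X (pR r) - MvPolynomial.X (pL r)) * Q =
        (P' - MvPolynomial.rename (Equiv.swap (pL r) (pR r)) P') *
          ((algebraMap K _ (t : K) - 1) * MvPolynomial.X (pR r) + 1)) →
      (∃ Q : MvPolynomial (Fin n) K,
      Tgen K t n ℓ κ r * φ (P * P') =
        φ (MvPolynomial.rename (Equiv.swap (pL r) (pR r)) (P * P')) * Tgen K t n ℓ κ r + φ Q ∧
      (MvPolynomial.X (pR r) - MvPolynomial.X (pL r)) * Q =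
        (P * P' - MvPolynomial.rename (Equiv.swap (pL r) (pR r)) (P * P')) *
          ((algebraMap K _ (t : K) - 1) * MvPolynomial.X (pR r) + 1)) := by
    rintro P P' ⟨Q, h1, h2⟩ ⟨Q', h1', h2'⟩
    refine ⟨MvPolynomial.rename (Equiv.swap (pL r) (pR r)) P * Q' + Q * P', ?_, ?_⟩
    · rw [map_mul, ← mul_assoc, h1, add_mul, mul_assoc, h1']
      simp only [map_mul, map_add, mul_add, mul_assoc, add_assoc]
    · rw [map_mul]
      linear_combination (MvPolynomial.rename (Equiv.swap (pL r) (pR r)) P) * h2' + P' * h2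
  induction P using MvPolynomial.induction_on with
  | C a =>
    refine ⟨0, ?_, ?_⟩
    · rw [MvPolynomial.rename_C, map_zero, add_zero, ← MvPolynomial.algebraMap_eq,
        AlgHom.commutes]
      exact (Algebra.commutes _ _).symm
    · simp
  | add P P' h h' =>
    obtain ⟨Q, h1, h2⟩ := h
    obtain ⟨Q', h1', h2'⟩ := h'
    refine ⟨Q + Q', ?_, ?_⟩
    · simp only [map_add, mul_add, add_mul, h1, h1']
      abel
    · rw [map_add]
      linear_combination h2 + h2'
  | mul_X P k h =>
    refine mulc P _ h ?_
    by_cases hl : k = pL r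
    · subst hl
      refine ⟨-((algebraMap K _ (t : K) - 1) * MvPolynomial.X (pR r) + 1), ?_, ?_⟩
      · rw [MvPolynomial.rename_X, Equiv.swap_apply_left]
        simp only [map_neg, map_mul, map_add, map_sub, map_one, hφ, AlgHom.commutes]
        have h3 := Algebra.commutes (t : K) (Lgen K t n ℓ κ (pR r))
        rw [mul_add, mul_sub, mul_one, ← h3] at hTL
        rw [sub_mul, one_mul, ← sub_eq_iff_eq_add.2 hTL]
        abel
      · rw [MvPolynomial.rename_X, Equiv.swap_apply_left]
        ring
    by_cases hr : k = pR r
    · subst hr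
      refine ⟨(algebraMap K _ (t : K) - 1) * MvPolynomial.X (pR r) + 1, ?_, ?_⟩
      · rw [MvPolynomial.rename_X, Equiv.swap_apply_right]
        simp only [map_mul, map_add, map_sub, map_one, hφ, AlgHom.commutes]
        exact hTM
      · rw [MvPolynomial.rename_X, Equiv.swap_apply_right]
    · refine ⟨0, ?_, ?_⟩
      · rw [MvPolynomial.rename_X, Equiv.swap_apply_of_ne_of_ne hl hr, map_zero, add_zero, hφ]
        exact T_L K t n ℓ κ r k ⟨fun h => hl (Fin.ext h), fun h => hr (Fin.ext h)⟩
      · rw [MvPolynomial.rename_X, Equiv.swap_apply_of_ne_of_ne hl hr]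
        ring

theorem symm_commutes {K : Type*} [Field K] (t : Kˣ) (n ℓ : ℕ) (κ : ℕ → ℤ)
    (φ : MvPolynomial (Fin n) K →ₐ[K] CycHecke K t n ℓ κ)
    (hφ : ∀ k, φ (MvPolynomial.X k) = Lgen K t n ℓ κ k) (r : Fin (n - 1))
    (P : MvPolynomial (Fin n) K)
    (hP : MvPolynomial.rename (Equiv.swap (pL r) (pR r)) P = P) :
    Tgen K t n ℓ κ r * φ P = φ P * Tgen K t n ℓ κ r := by
  obtain ⟨Q, h1, h2⟩ := demazure t n ℓ κ φ hφ r P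
  rw [hP] at h1 h2
  rw [sub_self, zero_mul] at h2
  have hne : (MvPolynomial.X (pR r) - MvPolynomial.X (pL r) : MvPolynomial (Fin n) K) ≠ 0 := by
    rw [sub_ne_zero]
    intro h
    have h3 := congrArg Fin.val (MvPolynomial.X_injective h)
    simp [pL, pR] at h3
  rw [(mul_eq_zero.1 h2).resolve_left hne, map_zero, add_zero] at h1
  exact h1

theorem exists_swap_res {ℓ n e : ℕ} (he : e ≠ 1) (κ : ℕ → ℤ) (i : Fin n → ZMod e)
    (r : Fin (n - 1)) (h : i (pL r) = i (pR r))
    (T : {T : StdTableau ℓ n // resSeq e κ T = i}) :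
    ∃ V : {T : StdTableau ℓ n // resSeq e κ T = i}, V.1.shape = T.1.shape ∧
      V.1.entry = swapEntry T.1.entry (r.1 + 1) := by
  obtain ⟨T, hT⟩ := T
  have hr := r.2
  have hres : ((content κ T (r.1 + 1) : ℤ) : ZMod e) =
      ((content κ T (r.1 + 1 + 1) : ℤ) : ZMod e) := by
    have a := congrFun hT (pL r)
    have b := congrFun hT (pR r)
    rw [h, ← b] at a
    exact a
  have hone : (1 : ZMod e) ≠ 0 := by
    intro h1
    have : ((1 : ℕ) : ZMod e) = 0 := by exact_mod_cast h1
    rw [ZMod.natCast_eq_zero_iff] at this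
    exact he (Nat.dvd_one.1 this)
  obtain ⟨V, hs, hV⟩ := exists_swap κ T (r.1 + 1) (by omega) (by omega)
    (by
      intro h1
      rw [h1] at hres
      push_cast at hres
      exact hone (left_eq_add.1 hres))
    (by
      intro h1
      rw [h1] at hres
      push_cast at hres
      exact hone (sub_eq_self.1 hres.symm))
  refine ⟨⟨V, ?_⟩, hs, hV⟩
  funext k
  have hk := content_swap κ T V r hs hV (Equiv.swap (pL r) (pR r) k)
  rw [Equiv.swap_apply_self] at hk
  have h1 : resSeq e κ V k = resSeq e κ T (Equiv.swap (pL r) (pR r) k) := by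
    unfold resSeq
    rw [hk]
  rw [h1, hT, Equiv.swap_apply_def]
  split_ifs with h2 h3
  · rw [h2, h]
  · rw [h3, h]
  · rfl

/-- Lemma L:IntertwinerEq: if `i_r = i_{r+1}` then `T_r` commutes
with the residue idempotent `f_i`. -/
theorem intertwiner_equal_residues (n ℓ e : ℕ) (he : e ≠ 1) (κ : ℕ → ℤ)
    (K : Type) [Field K] (t : Kˣ) (hsep : SeparatesF t n ℓ κ)
    (i : Fin n → ZMod e) (r : Fin (n - 1)) (h : i (pL r) = i (pR r)) :
    Tgen K t n ℓ κ r * fres K t n ℓ e κ i = fres K t n ℓ e κ i * Tgen K t n ℓ κ r := by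
  obtain ⟨φ, hφ⟩ := exists_eval K t n ℓ κ
  haveI := StdTableau.finite ℓ n
  haveI : Fintype {T : StdTableau ℓ n // resSeq e κ T = i} := Fintype.ofFinite _
  have hf : fres K t n ℓ e κ i =
      φ (∑ T : {T : StdTableau ℓ n // resSeq e κ T = i}, Fpoly K t n ℓ κ T.1) := by
    unfold fres
    rw [finsum_eq_sum_of_fintype, map_sum]
    exact Finset.sum_congr rfl fun T _ => (map_Fpoly K t n ℓ κ φ hφ T.1).symm
  rw [hf]
  apply symm_commutes t n ℓ κ φ hφ
  choose σ hσ1 hσ2 using exists_swap_res (ℓ := ℓ) he κ i r h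
  have hinv : Function.Involutive σ := by
    intro T
    apply Subtype.ext
    apply StdTableau.ext_entry
    rw [hσ2, hσ2, swapEntry_swapEntry]
  rw [map_sum, ← Equiv.sum_comp hinv.toPerm]
  refine Finset.sum_congr rfl fun T _ => ?_
  have hr := rename_Fpoly K t n ℓ κ (σ T).1 T.1 (Equiv.swap (pL r) (pR r)) (by
    intro k
    have h1 := content_swap κ T.1 (σ T).1 r (hσ1 T) (hσ2 T) (Equiv.swap (pL r) (pR r) k)
    rw [Equiv.swap_apply_self] at h1
    exact h1.symm)
  exact hr

end Paper
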